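/- Suppose Φ = log(1 + |z_1|² + … + |z_n|² + Σ_{j} a_j |z^{m_j}|²) with a_j > 0 and |m_j| ≥ 2 satisfies det(∂²Φ/∂z_α∂z̄_β) = e^{−qΦ} for an integer q ≥ 1. Writing x_α = |z_α|², the identity is equivalent to a polynomial identity det(P·P_{αβ} x_β δ-structure terms) · … = P^{n+1−q} in the variables x_1,…,x_n; in particular, comparing degrees shows q ≤ n+1, with equality q = n+1 if and only if all a_j = 0 (the Fubini–Study case). -/

import Mathlib

open scoped BigOperators

/-- Wirtinger derivative `∂f/∂z_α`. -/
noncomputable def wD {n : ℕ} (f : (Fin n → ℂ) → ℂ) (α : Fin n) (z : Fin n → ℂ) : ℂ :=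
  (fderiv ℝ f z (Pi.single α 1) - Complex.I * fderiv ℝ f z (Pi.single α Complex.I)) / 2

/-- Conjugate Wirtinger derivative `∂f/∂z̄_α`. -/
noncomputable def wDbar {n : ℕ} (f : (Fin n → ℂ) → ℂ) (α : Fin n) (z : Fin n → ℂ) : ℂ :=
  (fderiv ℝ f z (Pi.single α 1) + Complex.I * fderiv ℝ f z (Pi.single α Complex.I)) / 2

/-- The matrix `g_{αβ̄} = ∂²Φ/∂z_α ∂z̄_β` of a Kähler metric with potential `Φ`. -/
noncomputable def kahlerMatrix {n : ℕ} (Φ : (Fin n → ℂ) → ℝ) (z : Fin n → ℂ) :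
    Matrix (Fin n) (Fin n) ℂ :=
  fun α β => wD (fun w => wDbar (fun v => (Φ v : ℂ)) β w) α z

open MvPolynomial in
theorem hasFD_eval {n : ℕ} (p : MvPolynomial (Fin n) ℂ) (z : Fin n → ℂ) :
    HasFDerivAt (𝕜 := ℝ) (fun v : Fin n → ℂ => eval v p)
      (∑ i, eval z (pderiv i p) • (ContinuousLinearMap.proj (R := ℝ) (φ := fun _ : Fin n => ℂ) i)) z := by
  induction p using MvPolynomial.induction_on with
  | C a => 
    simp only [MvPolynomial.eval_C]
    refine (hasFDerivAt_const (𝕜 := ℝ) a z).congr_fderiv ?_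
    ext h
    simp
  | add p q hp hq =>
    simp only [map_add]
    refine (hp.add hq).congr_fderiv ?_
    ext h
    simp [add_mul, Finset.sum_add_distrib]
  | mul_X p i hp =>
    have h2 : HasFDerivAt (𝕜 := ℝ) (fun v : Fin n → ℂ => v i)
      (ContinuousLinearMap.proj (R := ℝ) (φ := fun _ : Fin n => ℂ) i) z := hasFDerivAt_apply i z
    have := hp.mul h2
    simp only [map_mul, eval_X]
    refine this.congr_fderiv ?_
    ext h
    simp [pderiv_X, Pi.single_apply, Derivation.leibniz, add_mul, Finset.sum_add_distrib, Finset.mul_sum, mul_assoc]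
    congr 1
    · rw [Finset.sum_eq_single i] <;> simp +contextual [eq_comm]

/-- Wirtinger differentiability. -/
def HasW {n : ℕ} (f : (Fin n → ℂ) → ℂ) (A B : Fin n → ℂ) (z : Fin n → ℂ) : Prop :=
  HasFDerivAt (𝕜 := ℝ) f (∑ i, (A i • (ContinuousLinearMap.proj (R := ℝ) (φ := fun _ : Fin n => ℂ) i) +
    B i • ((Complex.conjCLE : ℂ →L[ℝ] ℂ).comp (ContinuousLinearMap.proj (R := ℝ) (φ := fun _ : Fin n => ℂ) i)))) z

theorem HasW.wD {n : ℕ} {f : (Fin n → ℂ) → ℂ} {A B : Fin n → ℂ} {z : Fin n → ℂ} (h : HasW f A B z)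
    (α : Fin n) : wD f α z = A α := by
  rw [_root_.wD, HasFDerivAt.fderiv h]
  simp [Pi.single_apply, Finset.sum_add_distrib, apply_ite]
  linear_combination (B α - A α) / 2 * Complex.I_mul_I

theorem HasW.wDbar {n : ℕ} {f : (Fin n → ℂ) → ℂ} {A B : Fin n → ℂ} {z : Fin n → ℂ} (h : HasW f A B z)
    (α : Fin n) : wDbar f α z = B α := by
  rw [_root_.wDbar, HasFDerivAt.fderiv h]
  simp [Pi.single_apply, Finset.sum_add_distrib, apply_ite]
  linear_combination (A α - B α) / 2 * Complex.I_mul_I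

theorem HasW.mul {n : ℕ} {f g : (Fin n → ℂ) → ℂ} {A B C D : Fin n → ℂ} {z : Fin n → ℂ}
    (h : HasW f A B z) (k : HasW g C D z) :
    HasW (fun v => f v * g v) (fun i => A i * g z + f z * C i) (fun i => B i * g z + f z * D i) z := by
  refine (HasFDerivAt.mul h k).congr_fderiv ?_
  ext x
  simp [Finset.mul_sum, ← Finset.sum_add_distrib]
  refine Finset.sum_congr rfl fun j _ => by ring

theorem HasW.sum {n : ℕ} {K : Type*} [Fintype K] {f : K → (Fin n → ℂ) → ℂ} {A B : K → Fin n → ℂ}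
    {z : Fin n → ℂ} (h : ∀ k, HasW (f k) (A k) (B k) z) :
    HasW (fun v => ∑ k, f k v) (fun i => ∑ k, A k i) (fun i => ∑ k, B k i) z := by
  refine (HasFDerivAt.fun_sum (u := Finset.univ) (fun k _ => h k)).congr_fderiv ?_
  ext x
  simp [Finset.sum_mul, ← Finset.sum_add_distrib]
  rw [Finset.sum_comm]

theorem HasW.comp {n : ℕ} {f : (Fin n → ℂ) → ℂ} {g : ℂ → ℂ} {g' : ℂ} {A B : Fin n → ℂ} {z : Fin n → ℂ}
    (h : HasW f A B z) (hg : HasDerivAt g g' (f z)) :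
    HasW (fun v => g (f v)) (fun i => g' * A i) (fun i => g' * B i) z := by
  refine (HasFDerivAt.comp z (hg.hasFDerivAt.restrictScalars ℝ) h).congr_fderiv ?_
  ext x
  simp [Finset.sum_mul, ← Finset.sum_add_distrib]
  refine Finset.sum_congr rfl fun j _ => by ring

theorem HasW.const {n : ℕ} (c : ℂ) (z : Fin n → ℂ) : HasW (fun _ => c) (fun _ => 0) (fun _ => 0) z := by
  refine (hasFDerivAt_const c z).congr_fderiv ?_
  ext x
  simp

open MvPolynomial in
theorem HasW.eval {n : ℕ} (p : MvPolynomial (Fin n) ℂ) (z : Fin n → ℂ) :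
    HasW (fun v => eval v p) (fun i => MvPolynomial.eval z (pderiv i p)) (fun _ => 0) z := by
  refine (hasFD_eval p z).congr_fderiv ?_
  ext x
  simp

open ComplexConjugate in
theorem HasW.conj {n : ℕ} {f : (Fin n → ℂ) → ℂ} {A B : Fin n → ℂ} {z : Fin n → ℂ} (h : HasW f A B z) :
    HasW (fun v => conj (f v)) (fun i => conj (B i)) (fun i => conj (A i)) z := by
  refine (HasFDerivAt.comp z ((Complex.conjCLE : ℂ →L[ℝ] ℂ).hasFDerivAt) h).congr_fderiv ?_
  ext x
  simp [add_comm]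

open MvPolynomial ComplexConjugate in
theorem kahler_general {n : ℕ} {K : Type*} [Fintype K] (c : K → ℂ) (p : K → MvPolynomial (Fin n) ℂ)
    (Φ : (Fin n → ℂ) → ℝ)
    (hs : ∀ z, (∑ k, c k * (eval z (p k) * conj (eval z (p k)))) ∈ Complex.slitPlane)
    (hΦ : ∀ z, (Φ z : ℂ) = Complex.log (∑ k, c k * (eval z (p k) * conj (eval z (p k)))))
    (z : Fin n → ℂ) (α β : Fin n) :
    kahlerMatrix Φ z α β =
      (∑ k, c k * (eval z (pderiv α (p k)) * conj (eval z (pderiv β (p k))))) /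
        (∑ k, c k * (eval z (p k) * conj (eval z (p k)))) -
      (∑ k, c k * (eval z (p k) * conj (eval z (pderiv β (p k))))) *
      (∑ k, c k * (eval z (pderiv α (p k)) * conj (eval z (p k)))) /
        (∑ k, c k * (eval z (p k) * conj (eval z (p k)))) ^ 2 := by
  have hP : ∀ z, HasW (fun v => ∑ k, c k * (eval v (p k) * conj (eval v (p k)))) _ _ z := fun z =>
    HasW.sum fun k => (HasW.const (c k) z).mul ((HasW.eval (p k) z).mul (HasW.eval (p k) z).conj)
  have h1 : (fun w => wDbar (fun v => (Φ v : ℂ)) β w) = fun w =>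
      (∑ k, c k * (eval w (p k) * conj (eval w (pderiv β (p k))))) *
       (∑ k, c k * (eval w (p k) * conj (eval w (p k))))⁻¹ := by
    funext w
    simp only [hΦ]
    rw [((hP w).comp (Complex.hasDerivAt_log (hs w))).wDbar]
    simp [mul_comm]
  have h2 := (HasW.sum fun k => (HasW.const (c k) z).mul
    ((HasW.eval (p k) z).mul (HasW.eval (pderiv β (p k)) z).conj)).mul
    ((hP z).comp (hasDerivAt_inv (Complex.slitPlane_ne_zero (hs z))))
  rw [kahlerMatrix, h1, h2.wD]
  simp
  ring

theorem one_add_sum_le_prod' {ι : Type*} (s : Finset ι) (f : ι → ℝ) (h : ∀ i ∈ s, 1 ≤ f i) :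
    1 + ∑ i ∈ s, (f i - 1) ≤ ∏ i ∈ s, f i := by
  classical
  induction s using Finset.induction_on with
  | empty => simp
  | insert i s hi ih =>
    rw [Finset.sum_insert hi, Finset.prod_insert hi]
    have h1 := ih fun j hj => h j (Finset.mem_insert_of_mem hj)
    have h2 := h i (Finset.mem_insert_self i s)
    have h3 : 0 ≤ ∑ i ∈ s, (f i - 1) :=
      Finset.sum_nonneg fun j hj => by linarith [h j (Finset.mem_insert_of_mem hj)]
    nlinarith

theorem det_ge {ι : Type*} [Fintype ι] [DecidableEq ι] (M : Matrix ι ι ℝ) (hM : M.PosSemidef) :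
    1 + M.trace ≤ (1 + M).det := by
  have hH : (1 + M).IsHermitian := Matrix.isHermitian_one.add hM.1
  have h1 : ∀ i, 1 ≤ hH.eigenvalues i := by
    intro i
    have e := hH.mulVec_eigenvectorBasis i
    have h0 := hM.dotProduct_mulVec_nonneg (hH.eigenvectorBasis i : ι → ℝ)
    have hn : (hH.eigenvectorBasis i : ι → ℝ) ⬝ᵥ (hH.eigenvectorBasis i : ι → ℝ) = 1 := by
      have := hH.eigenvectorBasis.orthonormal.1 i
      have h3 := EuclideanSpace.real_norm_sq_eq (hH.eigenvectorBasis i)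
      rw [this] at h3
      simp only [dotProduct, ← pow_two]
      linarith
    rw [Matrix.add_mulVec, Matrix.one_mulVec] at e
    rw [eq_sub_of_add_eq' e] at h0
    simp [dotProduct_sub, hn] at h0
    linarith
  have hd := hH.det_eq_prod_eigenvalues
  have ht := hH.trace_eq_sum_eigenvalues
  have hk := one_add_sum_le_prod' Finset.univ hH.eigenvalues (fun i _ => h1 i)
  simp [Matrix.trace_add] at hd ht hk
  rw [hd]
  linarith

/-- The metric matrix at `z = (1, …, 1)`. -/
noncomputable def gOne {n N : ℕ} (a : Fin N → ℝ) (m : Fin N → (Fin n → ℕ)) : Matrix (Fin n) (Fin n) ℝ :=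
  fun α β => ((if α = β then 1 else 0) + ∑ j, a j * (m j α * m j β)) / (1 + n + ∑ j, a j) -
    (1 + ∑ j, a j * m j β) * (1 + ∑ j, a j * m j α) / (1 + n + ∑ j, a j) ^ 2

open Matrix in
theorem gOne_det {n N : ℕ} (a : Fin N → ℝ) (m : Fin N → (Fin n → ℕ)) (ha : ∀ j, 0 ≤ a j) :
    (gOne a m).det * (1 + n + ∑ j, a j) ^ (n + 1) = (1 + (Matrix.of fun (j : Fin N) (x : Unit ⊕ Fin n) =>
      √(a j) * Sum.elim (fun _ => (1 : ℝ) - ∑ i, m j i) (fun i => (m j i : ℝ)) x)ᵀ * (Matrix.of fun (j : Fin N) (x : Unit ⊕ Fin n) =>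
      √(a j) * Sum.elim (fun _ => (1 : ℝ) - ∑ i, m j i) (fun i => (m j i : ℝ)) x)).det := by
  set W := (Matrix.of fun (j : Fin N) (x : Unit ⊕ Fin n) =>
      √(a j) * Sum.elim (fun _ => (1 : ℝ) - ∑ i, m j i) (fun i => (m j i : ℝ)) x) with hW
  set P : ℝ := 1 + n + ∑ j, a j with hP
  have hP0 : 0 < P := by
    have := Finset.sum_nonneg fun j (_ : j ∈ Finset.univ) => ha j
    positivity
  let A : Matrix Unit Unit ℝ := of fun _ _ => P
  let B : Matrix Unit (Fin n) ℝ := of fun _ β => 1 + ∑ j, a j * m j β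
  let S : Matrix (Fin n) (Fin n) ℝ := of fun α β => (if α = β then 1 else 0) + ∑ j, a j * (m j α * m j β)
  let L : Matrix (Unit ⊕ Fin n) (Unit ⊕ Fin n) ℝ := fromBlocks 1 (of fun _ _ => 1) 0 1
  have hL : L.det = 1 := by simp [L]
  have hV : W * Lᵀ = of fun (j : Fin N) (x : Unit ⊕ Fin n) =>
      √(a j) * Sum.elim (fun _ => (1 : ℝ)) (fun i => (m j i : ℝ)) x := by
    ext j x
    rcases x with x | x
    · simp [mul_apply, L, W, ← Finset.mul_sum]; ring
    · simp [mul_apply, L, W, one_apply]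
  have hG : L * (1 + Wᵀ * W) * Lᵀ = fromBlocks A B Bᵀ S := by
    have : L * (1 + Wᵀ * W) * Lᵀ = L * Lᵀ + (W * Lᵀ)ᵀ * (W * Lᵀ) := by
      simp [Matrix.mul_add, Matrix.add_mul, Matrix.mul_assoc]
    have sq : ∀ j, √(a j) * √(a j) = a j := fun j => Real.mul_self_sqrt (ha j)
    have sq2 : ∀ j (x y : ℝ), √(a j) * x * (√(a j) * y) = a j * (x * y) := fun j x y => by
      linear_combination x * y * sq j
    rw [this, hV]
    ext x y
    rcases x with x | x <;> rcases y with y | y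
    · simp [mul_apply, L, A, P, sq]
    · simp [mul_apply, L, B, one_apply, ← mul_assoc, sq]
    · simp [mul_apply, L, B, one_apply]
      refine Finset.sum_congr rfl fun j _ => by linear_combination (m j x : ℝ) * sq j
    · simp [mul_apply, L, S, one_apply, sq2, eq_comm]
  have h1 : (1 + Wᵀ * W).det = (fromBlocks A B Bᵀ S).det := by
    rw [← hG]; simp [hL]
  rw [h1]
  have hA : A = diagonal fun _ => P := by ext; simp [A]
  letI : Invertible A := ⟨of fun _ _ => P⁻¹, by ext; simp [A, mul_apply, hP0.ne'], by ext; simp [A, mul_apply, hP0.ne']⟩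
  rw [det_fromBlocks₁₁]
  have h2 : S - Bᵀ * ⅟A * B = P • gOne a m := by
    have : ⅟A = of fun _ _ => P⁻¹ := rfl
    rw [this]
    ext α β
    simp [mul_apply, S, B, gOne, ← hP]
    field_simp
  rw [h2, det_smul]
  simp [A]
  ring

theorem gOne_ge {n N : ℕ} (a : Fin N → ℝ) (m : Fin N → (Fin n → ℕ)) (ha : ∀ j, 0 ≤ a j)
    (hdeg : ∀ j, 2 ≤ ∑ i, m j i) :
    1 + ∑ j, a j ≤ (gOne a m).det * (1 + n + ∑ j, a j) ^ (n + 1) := by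
  rw [gOne_det a m ha]
  refine le_trans ?_ (det_ge _ (by
    rw [← Matrix.conjTranspose_eq_transpose_of_trivial]
    exact Matrix.posSemidef_conjTranspose_mul_self _))
  simp [Matrix.trace, Matrix.mul_apply]
  refine le_add_of_le_of_nonneg (Finset.sum_le_sum fun j _ => ?_)
    (Finset.sum_nonneg fun i _ => Finset.sum_nonneg fun j _ => mul_self_nonneg _)
  have h : (2 : ℝ) ≤ ∑ i, (m j i : ℝ) := by exact_mod_cast hdeg j
  have h2 := Real.mul_self_sqrt (ha j)
  have h3 : a j * 1 ≤ a j * (1 - ∑ i, (m j i : ℝ)) ^ 2 :=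
    mul_le_mul_of_nonneg_left (by nlinarith) (ha j)
  calc a j ≤ a j * (1 - ∑ i, (m j i : ℝ)) ^ 2 := by linarith
    _ = (√(a j) * √(a j)) * (1 - ∑ i, (m j i : ℝ)) ^ 2 := by rw [h2]
    _ = _ := by ring

theorem gOne_zero {n N : ℕ} (a : Fin N → ℝ) (m : Fin N → (Fin n → ℕ)) (ha : ∀ j, a j = 0) :
    (gOne a m).det * (1 + n + ∑ j, a j) ^ (n + 1) = 1 := by
  rw [gOne_det a m (fun j => (ha j).ge)]
  have : (Matrix.of fun (j : Fin N) (x : Unit ⊕ Fin n) =>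
      √(a j) * Sum.elim (fun _ => (1 : ℝ) - ∑ i, m j i) (fun i => (m j i : ℝ)) x) = 0 := by
    ext; simp [ha]
  rw [this]; simp

/-- if `Φ = log(1 + Σ|z_j|² + Σ a_j|z^{m_j}|²)` (with `a_j ≥ 0`, `|m_j| ≥ 2`)
satisfies `det(∂²Φ/∂z∂z̄) = e^{−qΦ}` for an integer `q ≥ 1`, then `q ≤ n+1`, with equality
`q = n+1` if and only if all `a_j = 0` (the Fubini–Study case). -/
theorem stmt16 (n N : ℕ) (hn : 0 < n) (a : Fin N → ℝ) (m : Fin N → (Fin n → ℕ))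
    (ha : ∀ j, 0 ≤ a j) (hm : Function.Injective m) (hdeg : ∀ j, 2 ≤ ∑ i, m j i)
    (Φ : (Fin n → ℂ) → ℝ)
    (hΦ : ∀ z, Φ z = Real.log (1 + ∑ j, ‖z j‖ ^ 2 +
      ∑ j, a j * ∏ i, ‖z i‖ ^ (2 * m j i)))
    (q : ℕ) (hq : 1 ≤ q)
    (heq : ∀ z, (kahlerMatrix Φ z).det = Complex.exp (-(q : ℂ) * Φ z)) :
    q ≤ n + 1 ∧ (q = n + 1 ↔ ∀ j, a j = 0) := by
  set P : ℝ := 1 + n + ∑ j, a j with hP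
  have hs0 : 0 ≤ ∑ j, a j := Finset.sum_nonneg fun j _ => ha j
  have hn1 : (1 : ℝ) ≤ n := by exact_mod_cast hn
  have hP1 : 1 < P := by linarith
  let c : Option (Fin n) ⊕ Fin N → ℂ := Sum.elim (fun _ => 1) (fun j => (a j : ℂ))
  let p : Option (Fin n) ⊕ Fin N → MvPolynomial (Fin n) ℂ :=
    Sum.elim (fun o => o.elim 1 (fun i => MvPolynomial.X i))
      (fun j => MvPolynomial.monomial (Finsupp.equivFunOnFinite.symm (m j)) 1)
  have hsum : ∀ z : Fin n → ℂ, (∑ k, c k * (MvPolynomial.eval z (p k) *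
      (starRingEnd ℂ) (MvPolynomial.eval z (p k)))) = ((1 + ∑ j, ‖z j‖ ^ 2 +
      ∑ j, a j * ∏ i, ‖z i‖ ^ (2 * m j i) : ℝ) : ℂ) := by
    intro z
    simp [c, p, MvPolynomial.eval_monomial, Finsupp.prod_fintype, Complex.mul_conj, Complex.normSq_eq_norm_sq,
      Fintype.sum_option, ← Finset.prod_mul_distrib, ← mul_pow, pow_mul]
    simp only [← Finset.prod_pow, ← pow_mul, mul_comm]
  have hpos : ∀ z : Fin n → ℂ, 0 < 1 + ∑ j, ‖z j‖ ^ 2 +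
      ∑ j, a j * ∏ i, ‖z i‖ ^ (2 * m j i) := by
    intro z
    have h1 : 0 ≤ ∑ j, a j * ∏ i, ‖z i‖ ^ (2 * m j i) :=
      Finset.sum_nonneg fun j _ => mul_nonneg (ha j) (Finset.prod_nonneg fun i _ => by positivity)
    positivity
  have hk : kahlerMatrix Φ (fun _ => 1) = (gOne a m).map Complex.ofReal := by
    ext α β
    rw [kahler_general c p Φ]
    · have hX : ∀ α i : Fin n, MvPolynomial.eval (fun _ => (1:ℂ)) (Pi.single (M := fun _ => MvPolynomial (Fin n) ℂ) α 1 i) = if i = α then 1 else 0 := by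
        intro α i
        simp [Pi.single_apply, apply_ite]
      simp [c, p, gOne, Fintype.sum_option, MvPolynomial.pderiv_monomial, MvPolynomial.eval_monomial, Finsupp.prod_fintype, hX, apply_ite]
      simp only [eq_comm]
    · intro z
      rw [hsum]
      exact Complex.ofReal_mem_slitPlane.2 (hpos z)
    · intro z
      rw [hsum, hΦ, Complex.ofReal_log (hpos z).le]
  have h1 := heq (fun _ => 1)
  have hΦ1 : Φ (fun _ => 1) = Real.log P := by rw [hΦ]; simp [hP]
  rw [hk, hΦ1] at h1
  have h2 : (gOne a m).det = Real.exp (-q * Real.log P) := by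
    have h3 : ((gOne a m).map Complex.ofReal).det = ((gOne a m).det : ℂ) :=
      (RingHom.map_det Complex.ofRealHom (gOne a m)).symm
    rw [h3] at h1
    exact_mod_cast h1
  have h3 : (gOne a m).det * P ^ q = 1 := by
    have : P ^ q = Real.exp (q * Real.log P) := by
      rw [Real.exp_nat_mul, Real.exp_log (by linarith)]
    rw [h2, this, ← Real.exp_add]; simp
  have hge := gOne_ge a m ha hdeg
  have hze := gOne_zero a m
  rw [← hP] at hge hze
  have h4 : (gOne a m).det * P ^ (n + 1) * P ^ q = P ^ (n + 1) := by
    linear_combination P ^ (n + 1) * h3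
  have hPq : 0 < P ^ q := by positivity
  refine ⟨?_, ?_, ?_⟩
  · by_contra hlt
    have := pow_lt_pow_right₀ hP1 (not_le.1 hlt)
    nlinarith
  · intro h
    rw [h] at h3
    have : ∑ j, a j = 0 := by linarith
    intro j
    exact (Finset.sum_eq_zero_iff_of_nonneg fun j _ => ha j).1 this j (Finset.mem_univ j)
  · intro h
    rw [hze h, one_mul] at h4
    exact pow_right_injective₀ (by linarith) hP1.ne' h4
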